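/- Let ν be a lattice path with m east and n north steps and ℓ = m+n. The map T ↦ b(T) is a bijection from the set of ν-trees onto the set of ν-bracket vectors, and the map μ ↦ b(μ) is a bijection from the set of ν-paths onto the set of ν-bracket vectors. -/

import Mathlib

open scoped Classical

/-! Lattice paths: `true` = north step, `false` = east step. -/

def eastSteps (ν : List Bool) : ℕ := ν.count false
def northSteps (ν : List Bool) : ℕ := ν.count true

/-- Height at which the path first reaches abscissa `x`. -/
def heightAt : List Bool → ℕ → ℕ
  | _, 0 => 0
  | [], _ + 1 => 0
  | true :: rest, x + 1 => heightAt rest (x + 1) + 1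
  | false :: rest, x + 1 => heightAt rest x

/-- Lattice point of a path after `i` steps. -/
def pointAt (μ : List Bool) (i : ℕ) : ℕ × ℕ :=
  ((μ.take i).count false, (μ.take i).count true)

/-- The set `A_ν` of lattice points weakly above `ν`. -/
def APts (ν : List Bool) : Set (ℕ × ℕ) :=
  {p | p.1 ≤ eastSteps ν ∧ heightAt ν p.1 ≤ p.2 ∧ p.2 ≤ northSteps ν}

def Incompatible (ν : List Bool) (p q : ℕ × ℕ) : Prop :=
  (p.1 < q.1 ∧ p.2 < q.2 ∧ (q.1, p.2) ∈ APts ν) ∨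
    (q.1 < p.1 ∧ q.2 < p.2 ∧ (p.1, q.2) ∈ APts ν)

def Compatible (ν : List Bool) (p q : ℕ × ℕ) : Prop := ¬ Incompatible ν p q

def IsNuTree (ν : List Bool) (T : Set (ℕ × ℕ)) : Prop :=
  T ⊆ APts ν ∧ T.Pairwise (Compatible ν) ∧
    ∀ T', T' ⊆ APts ν → T'.Pairwise (Compatible ν) → T ⊆ T' → T' = T

def IsRightRotationAt (T T' : Set (ℕ × ℕ)) (q q' : ℕ × ℕ) : Prop :=
  ∃ x y x'' y', q = (x, y) ∧ q' = (x'', y') ∧ x < x'' ∧ y < y' ∧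
    (x, y) ∈ T ∧ (x, y') ∈ T ∧ (x'', y) ∈ T ∧
    (∀ b, y < b → b < y' → (x, b) ∉ T) ∧
    (∀ a, x < a → a < x'' → (a, y) ∉ T) ∧
    (∀ a, x < a → a < x'' → (a, y') ∉ T) ∧
    (∀ b, y < b → b < y' → (x'', b) ∉ T) ∧
    T' = (T \ {(x, y)}) ∪ {(x'', y')}

def IsRightRotation (T T' : Set (ℕ × ℕ)) : Prop :=
  ∃ q q', IsRightRotationAt T T' q q'

/-- Order relation of the rotation poset of ν-trees. -/
def TreeLE (ν : List Bool) : Set (ℕ × ℕ) → Set (ℕ × ℕ) → Prop :=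
  Relation.ReflTransGen fun A B => IsNuTree ν A ∧ IsNuTree ν B ∧ IsRightRotation A B

def IsNuPath (ν μ : List Bool) : Prop :=
  eastSteps μ = eastSteps ν ∧ northSteps μ = northSteps ν ∧
    ∀ i ≤ μ.length, pointAt μ i ∈ APts ν

noncomputable def horiz (ν : List Bool) (p : ℕ × ℕ) : ℕ :=
  sSup {k | (p.1 + k, p.2) ∈ APts ν}

/-- Covering relation of the ν-Tamari lattice. -/
def TamariCover (ν μ μ' : List Bool) : Prop :=
  IsNuPath ν μ ∧ IsNuPath ν μ' ∧
    ∃ i j, 0 < i ∧ i < j ∧ j ≤ μ.length ∧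
      μ.getD (i - 1) true = false ∧ μ.getD i false = true ∧
      horiz ν (pointAt μ j) = horiz ν (pointAt μ i) ∧
      (∀ k, i < k → k < j → horiz ν (pointAt μ k) ≠ horiz ν (pointAt μ i)) ∧
      μ' = μ.take (i - 1) ++ (μ.drop i).take (j - i) ++ [false] ++ μ.drop j

def TamariLE (ν : List Bool) : List Bool → List Bool → Prop :=
  Relation.ReflTransGen (TamariCover ν)

/-! Flushing maps -/

def rowAvail (ν : List Bool) (y : ℕ) : List ℕ :=
  ((List.range (eastSteps ν + 1)).filter fun x => decide (heightAt ν x ≤ y)).reverse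

def pointsAtHeight (μ : List Bool) (y : ℕ) : ℕ :=
  ((List.range (μ.length + 1)).filter fun i => decide ((μ.take i).count true = y)).length

def rflushAux (ν : List Bool) : List ℕ → ℕ → List ℕ → List (ℕ × ℕ)
  | [], _, _ => []
  | c :: rest, y, forbidden =>
    let placed := ((rowAvail ν y).filter fun x => decide (x ∉ forbidden)).take c
    placed.map (fun x => (x, y)) ++ rflushAux ν rest (y + 1) (forbidden ++ placed.dropLast)

/-- Right-flushing map `R`. -/
def Rflush (ν μ : List Bool) : Set (ℕ × ℕ) :=
  {p | p ∈ rflushAux ν ((List.range (northSteps ν + 1)).map (pointsAtHeight μ)) 0 []}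

def lflushAux (m : ℕ) : List ℕ → ℕ → List ℕ → List (ℕ × ℕ)
  | [], _, _ => []
  | c :: rest, y, forbidden =>
    let placed := ((List.range (m + 1)).filter fun x => decide (x ∉ forbidden)).take c
    placed.map (fun x => (x, y)) ++ lflushAux m rest (y + 1) (forbidden ++ placed.dropLast)

noncomputable def rowCount (T : Set (ℕ × ℕ)) (y : ℕ) : ℕ := {x | (x, y) ∈ T}.ncard

/-- Left-flushing map `L`. -/
noncomputable def Lflush (ν : List Bool) (T : Set (ℕ × ℕ)) : Set (ℕ × ℕ) :=
  {p | p ∈ lflushAux (eastSteps ν) ((List.range (northSteps ν + 1)).map (rowCount T)) 0 []}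

def pathPointSet (μ : List Bool) : Set (ℕ × ℕ) := {p | ∃ i ≤ μ.length, pointAt μ i = p}

/-! Bracket vectors (0-indexed positions `0,…,ℓ`). -/

noncomputable def fpos (ν : List Bool) (k : ℕ) : ℕ :=
  sSup {i | i ≤ ν.length ∧ (ν.take i).count true = k}

def bmin (ν : List Bool) : List ℕ :=
  (List.range (ν.length + 1)).map fun i => (ν.take i).count true

def IsBracketVector (ν : List Bool) (b : List ℕ) : Prop :=
  b.length = ν.length + 1 ∧
    (∀ k ≤ northSteps ν, b.getD (fpos ν k) 0 = k) ∧
    (∀ i < b.length, (bmin ν).getD i 0 ≤ b.getD i 0 ∧ b.getD i 0 ≤ northSteps ν) ∧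
    ∀ i j k, i < j → j < k → k < b.length →
      ¬(b.getD i 0 = b.getD k 0 ∧ b.getD i 0 < b.getD j 0)

noncomputable def leftChild (T : Set (ℕ × ℕ)) (p : ℕ × ℕ) : Option (ℕ × ℕ) :=
  if ∃ b, (p.1, b) ∈ T ∧ b < p.2 then some (p.1, sSup {b | (p.1, b) ∈ T ∧ b < p.2})
  else none

noncomputable def rightChild (T : Set (ℕ × ℕ)) (p : ℕ × ℕ) : Option (ℕ × ℕ) :=
  if ∃ a, (a, p.2) ∈ T ∧ p.1 < a then
    if ∃ b, (sInf {a | (a, p.2) ∈ T ∧ p.1 < a}, b) ∈ T ∧ p.2 < b then none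
    else some (sInf {a | (a, p.2) ∈ T ∧ p.1 < a}, p.2)
  else none

noncomputable def inorderAux (T : Set (ℕ × ℕ)) : ℕ → ℕ × ℕ → List (ℕ × ℕ)
  | 0, _ => []
  | fuel + 1, p =>
    (match leftChild T p with
      | none => []
      | some l => inorderAux T fuel l) ++ p ::
      (match rightChild T p with
        | none => []
        | some r => inorderAux T fuel r)

/-- Bracket vector of a ν-tree: y-coordinates read in in-order from the root `(0,n)`. -/
noncomputable def bracketOfTree (ν : List Bool) (T : Set (ℕ × ℕ)) : List ℕ :=
  (inorderAux T T.ncard (0, northSteps ν)).map Prod.snd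

noncomputable def bracketAssign (ν μ : List Bool) : List (ℕ × ℕ) :=
  ((List.range (northSteps ν + 1)).foldl
    (fun (st : List (ℕ × ℕ) × List ℕ) k =>
      let picked := ((st.2.filter fun i => decide (i ≤ fpos ν k)).reverse).take
        (pointsAtHeight μ k)
      (st.1 ++ picked.map fun i => (i, k), st.2.filter fun i => decide (i ∉ picked)))
    ([], List.range (ν.length + 1))).1

/-- Bracket vector of a ν-path. -/
noncomputable def bracketOfPath (ν μ : List Bool) : List ℕ :=
  (List.range (ν.length + 1)).map fun i => ((bracketAssign ν μ).lookup i).getD 0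

/-- Componentwise order on (equal length) integer vectors. -/
def listLE (b b' : List ℕ) : Prop :=
  b.length = b'.length ∧ ∀ i, b.getD i 0 ≤ b'.getD i 0

/-! Reversal -/

def revPath (ν : List Bool) : List Bool := ν.reverse.map fun s => !s

def revTree (ν : List Bool) (T : Set (ℕ × ℕ)) : Set (ℕ × ℕ) :=
  (fun p : ℕ × ℕ => (northSteps ν - p.2, eastSteps ν - p.1)) '' T

/-! Pipe dreams and subword complexes -/

def dOf (ν : List Bool) (p : ℕ × ℕ) : ℕ := p.1 + (northSteps ν - p.2)

def labelPerm (ν : List Bool) (p : ℕ × ℕ) : Equiv.Perm ℕ :=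
  Equiv.swap (dOf ν p + 1) (dOf ν p + 2)

/-- The points of `A_ν` in reading order: rows from bottom to top, each left to right. -/
def readingList (ν : List Bool) : List (ℕ × ℕ) :=
  ((List.range (northSteps ν + 1)).map fun y =>
    ((List.range (eastSteps ν + 1)).filter fun x => decide (heightAt ν x ≤ y)).map
      fun x => (x, y)).flatten

/-- The minimal ν-tree. -/
def TminSet (ν : List Bool) : Set (ℕ × ℕ) :=
  {p | p ∈ APts ν ∧ (p.1 = 0 ∨ ∃ i < ν.length, ν.getD i true = false ∧ p = pointAt ν (i + 1))}

noncomputable def prodOver (ν : List Bool) (C : Set (ℕ × ℕ)) : Equiv.Perm ℕ :=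
  (((readingList ν).filter fun p => decide (p ∈ C)).map (labelPerm ν)).prod

/-- Coxeter length: number of inversions. -/
noncomputable def lenInv (π : Equiv.Perm ℕ) : ℕ :=
  {q : ℕ × ℕ | q.1 < q.2 ∧ π q.2 < π q.1}.ncard

noncomputable def piNu (ν : List Bool) : Equiv.Perm ℕ := prodOver ν (APts ν \ TminSet ν)

def Qword (ν : List Bool) : List (Equiv.Perm ℕ) := (readingList ν).map (labelPerm ν)

noncomputable def prodAt (Q : List (Equiv.Perm ℕ)) (P : Finset ℕ) : Equiv.Perm ℕ :=
  (((List.range Q.length).filter fun i => decide (i ∈ P)).map fun i => Q.getD i 1).prod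

def IsFacet (Q : List (Equiv.Perm ℕ)) (π : Equiv.Perm ℕ) (I : Finset ℕ) : Prop :=
  I ⊆ Finset.range Q.length ∧
    prodAt Q (Finset.range Q.length \ I) = π ∧
    (Finset.range Q.length \ I).card = lenInv π

def IncFlip (Q : List (Equiv.Perm ℕ)) (π : Equiv.Perm ℕ) (I J : Finset ℕ) : Prop :=
  IsFacet Q π I ∧ IsFacet Q π J ∧ ∃ i ∈ I, ∃ j ∈ J, i < j ∧ I.erase i = J.erase j

def FlipLE (Q : List (Equiv.Perm ℕ)) (π : Equiv.Perm ℕ) : Finset ℕ → Finset ℕ → Prop :=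
  Relation.ReflTransGen (IncFlip Q π)

/-- The maximal ν-tree. -/
def TmaxSet (ν : List Bool) : Set (ℕ × ℕ) :=
  {p | (p.1 ≤ eastSteps ν ∧ p.2 = northSteps ν) ∨ ∃ i < ν.length, ν.getD i false = true ∧ p = pointAt ν i}

/-!
Trees, paths and bracket vectors are all determined by how many points (or entries) they have at
each height, and the same sequences `c 0, …, c n` occur in all three families: those with positive
entries whose partial sums `c 0 + ⋯ + c k` are at most `f k + 1`, with equality for `k = n`. Both
maps preserve this sequence. For paths, the greedy placement of the values recovers any bracket
vector with the prescribed number of entries of each value. For trees, every bracket vector is the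
in-order reading of an explicit ν-tree; in a ν-tree, the points of a row are the rightmost available
positions not forbidden by the lower rows, so its row counts determine it.
-/

open scoped Finset

section LatticePath

/-- The height of a lattice path after `i` steps. -/
def height (ν : List Bool) (i : ℕ) : ℕ := (ν.take i).count true

/-- The abscissa of a lattice path after `i` steps. -/
def abscissa (ν : List Bool) (i : ℕ) : ℕ := (ν.take i).count false

variable {ν : List Bool} {i j k x y : ℕ}

lemma height_zero (ν : List Bool) : height ν 0 = 0 := rfl

lemma height_true_cons (ν : List Bool) (i : ℕ) : height (true :: ν) (i + 1) = height ν i + 1 := by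
  simp [height]

lemma height_false_cons (ν : List Bool) (i : ℕ) : height (false :: ν) (i + 1) = height ν i := by
  simp [height]

lemma height_mono (ν : List Bool) : Monotone (height ν) :=
  fun _ _ h => (List.take_sublist_take_left h).count_le true

lemma height_le_northSteps (ν : List Bool) (i : ℕ) : height ν i ≤ northSteps ν :=
  (List.take_sublist i ν).count_le true

lemma abscissa_mono (ν : List Bool) : Monotone (abscissa ν) :=
  fun _ _ h => (List.take_sublist_take_left h).count_le false

lemma abscissa_le_eastSteps (ν : List Bool) (i : ℕ) : abscissa ν i ≤ eastSteps ν :=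
  (List.take_sublist i ν).count_le false

lemma abscissa_add_height (hi : i ≤ ν.length) : abscissa ν i + height ν i = i := by
  simp [abscissa, height, hi]

lemma eastSteps_add_northSteps (ν : List Bool) : eastSteps ν + northSteps ν = ν.length :=
  List.count_false_add_count_true ν

lemma exists_height_eq (hk : k ≤ northSteps ν) : ∃ i ≤ ν.length, height ν i = k := by
  induction ν generalizing k with
  | nil => exact ⟨0, le_rfl, (Nat.le_zero.mp hk).symm⟩
  | cons s ν ih =>
    cases s with
    | false =>
      obtain ⟨i, hi, h⟩ := ih (k := k) (by simpa [northSteps] using hk)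
      exact ⟨i + 1, Nat.succ_le_succ hi, by rw [height_false_cons, h]⟩
    | true =>
      cases k with
      | zero => exact ⟨0, Nat.zero_le _, height_zero _⟩
      | succ k =>
        obtain ⟨i, hi, h⟩ := ih (k := k) (by simpa [northSteps] using hk)
        exact ⟨i + 1, Nat.succ_le_succ hi, by rw [height_true_cons, h]⟩

lemma fpos_mem (hk : k ≤ northSteps ν) :
    fpos ν k ∈ {i | i ≤ ν.length ∧ height ν i = k} :=
  Nat.sSup_mem (exists_height_eq hk) ⟨ν.length, fun _ hi => hi.1⟩

lemma fpos_le_length (hk : k ≤ northSteps ν) : fpos ν k ≤ ν.length := (fpos_mem hk).1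

lemma height_fpos (hk : k ≤ northSteps ν) : height ν (fpos ν k) = k := (fpos_mem hk).2

lemma height_le_iff_le_fpos (hi : i ≤ ν.length) (hk : k ≤ northSteps ν) :
    height ν i ≤ k ↔ i ≤ fpos ν k := by
  refine ⟨fun h => ?_, fun h => (height_mono ν h).trans_eq (height_fpos hk)⟩
  rcases le_total i (fpos ν k) with hle | hge
  · exact hle
  · have hik : height ν i = k := h.antisymm ((height_fpos hk).ge.trans (height_mono ν hge))
    exact le_csSup ⟨ν.length, fun _ hi => hi.1⟩ ⟨hi, hik⟩

lemma fpos_lt_fpos (hjk : j < k) (hk : k ≤ northSteps ν) : fpos ν j < fpos ν k := by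
  rw [← not_le, ← height_le_iff_le_fpos (fpos_le_length hk) (hjk.le.trans hk), height_fpos hk]
  exact hjk.not_ge

lemma fpos_le_fpos (hjk : j ≤ k) (hk : k ≤ northSteps ν) : fpos ν j ≤ fpos ν k :=
  hjk.eq_or_lt.elim (fun h => h ▸ le_rfl) fun h => (fpos_lt_fpos h hk).le

lemma fpos_northSteps (ν : List Bool) : fpos ν (northSteps ν) = ν.length :=
  (fpos_le_length le_rfl).antisymm
    ((height_le_iff_le_fpos le_rfl le_rfl).mp (height_le_northSteps ν _))

lemma le_abscissa_iff (hx : x ≤ eastSteps ν) : x ≤ abscissa ν i ↔ x + heightAt ν x ≤ i := by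
  induction ν generalizing x i with
  | nil => simp [Nat.le_zero.mp hx, heightAt]
  | cons s ν ih =>
    cases x with
    | zero => simp [heightAt]
    | succ x =>
      cases i with
      | zero => simp [abscissa]
      | succ i =>
        cases s with
        | false =>
          have := ih (x := x) (i := i) (by simpa [eastSteps] using hx)
          simp only [abscissa, List.take_succ_cons, List.count_cons_self, heightAt] at this ⊢
          omega
        | true =>
          have := ih (x := x + 1) (i := i) (by simpa [eastSteps] using hx)
          simp only [abscissa, List.take_succ_cons, heightAt, ne_eq, Bool.true_eq_false,
            not_false_eq_true, List.count_cons_of_ne] at this ⊢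
          omega

lemma mem_APts_iff : (x, y) ∈ APts ν ↔ y ≤ northSteps ν ∧ x + y ≤ fpos ν y := by
  have hℓ := eastSteps_add_northSteps ν
  have key (hx : x ≤ eastSteps ν) (hy : y ≤ northSteps ν) :
      heightAt ν x ≤ y ↔ x + y ≤ fpos ν y := by
    have hxy : x + y ≤ ν.length := by omega
    have := abscissa_add_height hxy
    rw [← height_le_iff_le_fpos hxy hy, ← Nat.add_le_add_iff_left (n := x), ← le_abscissa_iff hx]
    omega
  constructor
  · rintro ⟨hx, hxy, hy⟩
    exact ⟨hy, (key hx hy).mp hxy⟩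
  · rintro ⟨hy, hxy⟩
    have hle := hxy.trans (fpos_le_length hy)
    have hheight := (height_le_iff_le_fpos hle hy).mpr hxy
    have hx : x ≤ eastSteps ν := by
      have := abscissa_add_height hle
      have := abscissa_le_eastSteps ν (x + y)
      omega
    exact ⟨hx, (key hx hy).mpr hxy, hy⟩

lemma mem_APts_of_le_snd (h : (x, y) ∈ APts ν) (hk : y ≤ k) (hkn : k ≤ northSteps ν) :
    (x, k) ∈ APts ν :=
  ⟨h.1, h.2.1.trans hk, hkn⟩

lemma zero_mem_APts (hk : k ≤ northSteps ν) : (0, k) ∈ APts ν :=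
  ⟨Nat.zero_le _, by simp [heightAt], hk⟩

lemma le_fpos (hk : k ≤ northSteps ν) : k ≤ fpos ν k := by
  simpa using (mem_APts_iff.mp (zero_mem_APts hk)).2

lemma finite_APts (ν : List Bool) : (APts ν).Finite :=
  ((Set.finite_Iic (eastSteps ν)).prod (Set.finite_Iic (northSteps ν))).subset
    fun _ h => ⟨h.1, h.2.2⟩

end LatticePath

section Content

/-- The number of indices `i < N` at which `g` takes the value `k`. -/
def levelCount (g : ℕ → ℕ) (N k : ℕ) : ℕ := #{i ∈ Finset.range N | g i = k}

/-- The row counts `c 0, …, c n` that ν-trees, ν-paths and ν-bracket vectors can have: all are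
positive, the lowest `k + 1` rows carry at most as many points as `ν` has up to height `k`, and
there are `ℓ + 1` points in total. Each of the three families is parametrised by these sequences. -/
structure Admissible (ν : List Bool) (c : ℕ → ℕ) : Prop where
  pos : ∀ k ≤ northSteps ν, 0 < c k
  sum_le : ∀ k ≤ northSteps ν, ∑ j ∈ Finset.range (k + 1), c j ≤ fpos ν k + 1
  sum_eq : ∑ j ∈ Finset.range (northSteps ν + 1), c j = ν.length + 1

variable {ν : List Bool} {g : ℕ → ℕ} {N i k : ℕ}

lemma levelCount_pos (hi : i < N) (hk : g i = k) : 0 < levelCount g N k :=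
  Finset.card_pos.mpr ⟨i, by simp [hi, hk]⟩

lemma sum_levelCount (g : ℕ → ℕ) (N k : ℕ) :
    ∑ j ∈ Finset.range k, levelCount g N j = #{i ∈ Finset.range N | g i < k} := by
  simpa only [levelCount, Finset.mem_range] using
    Finset.sum_card_fiberwise_eq_card_filter (Finset.range N) (Finset.range k) g

lemma admissible_levelCount (hsurj : ∀ k ≤ northSteps ν, ∃ i ≤ ν.length, g i = k)
    (hnorth : ∀ i ≤ ν.length, g i ≤ northSteps ν) (hfpos : ∀ i ≤ ν.length, i ≤ fpos ν (g i)) :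
    Admissible ν (levelCount g (ν.length + 1)) where
  pos k hk :=
    have ⟨_, hi, hgi⟩ := hsurj k hk
    levelCount_pos (Nat.lt_succ_of_le hi) hgi
  sum_le k hk := by
    rw [sum_levelCount, ← Finset.card_range (fpos ν k + 1)]
    refine Finset.card_le_card fun i hi => ?_
    simp only [Finset.mem_filter, Finset.mem_range, Nat.lt_succ_iff] at hi ⊢
    exact (hfpos i hi.1).trans (fpos_le_fpos hi.2 hk)
  sum_eq := by
    rw [sum_levelCount, Finset.filter_true_of_mem, Finset.card_range]
    simpa [Nat.lt_succ_iff] using hnorth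

end Content

section Path

variable {ν μ : List Bool} {c : ℕ → ℕ} {i k n : ℕ}

lemma pointsAtHeight_eq_levelCount (μ : List Bool) :
    pointsAtHeight μ = levelCount (height μ) (μ.length + 1) := rfl

lemma pointsAtHeight_nil (k : ℕ) : pointsAtHeight [] k = if k = 0 then 1 else 0 := by
  cases k <;> rfl

lemma pointsAtHeight_cons (s : Bool) (μ : List Bool) (k : ℕ) :
    pointsAtHeight (s :: μ) k =
      (if k = 0 then 1 else 0) +
        levelCount (fun i => height (s :: μ) (i + 1)) (μ.length + 1) k := by
  rw [pointsAtHeight_eq_levelCount, levelCount, levelCount, Finset.card_filter, Finset.card_filter,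
    List.length_cons, Finset.sum_range_succ', add_comm, height_zero]
  simp only [eq_comm]

lemma pointsAtHeight_false_cons (μ : List Bool) (k : ℕ) :
    pointsAtHeight (false :: μ) k = (if k = 0 then 1 else 0) + pointsAtHeight μ k := by
  simp only [pointsAtHeight_cons, height_false_cons, pointsAtHeight_eq_levelCount]

lemma pointsAtHeight_true_cons_zero (μ : List Bool) : pointsAtHeight (true :: μ) 0 = 1 := by
  simp [pointsAtHeight_cons, height_true_cons, levelCount]

lemma pointsAtHeight_true_cons_succ (μ : List Bool) (k : ℕ) :
    pointsAtHeight (true :: μ) (k + 1) = pointsAtHeight μ k := by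
  simp [pointsAtHeight_cons, height_true_cons, pointsAtHeight_eq_levelCount, levelCount]

lemma pointsAtHeight_replicate_append (r : ℕ) (μ : List Bool) (k : ℕ) :
    pointsAtHeight (List.replicate r false ++ μ) k =
      (if k = 0 then r else 0) + pointsAtHeight μ k := by
  induction r with
  | zero => simp
  | succ r ih =>
    rw [List.replicate_succ, List.cons_append, pointsAtHeight_false_cons, ih]
    split_ifs <;> omega

lemma pointsAtHeight_zero_pos (μ : List Bool) : 0 < pointsAtHeight μ 0 :=
  levelCount_pos (g := height μ) (Nat.succ_pos _) (height_zero μ)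

lemma pointsAtHeight_eq_zero (hk : northSteps μ < k) : pointsAtHeight μ k = 0 := by
  rw [pointsAtHeight_eq_levelCount, levelCount, Finset.card_eq_zero, Finset.filter_eq_empty_iff]
  exact fun i _ h => hk.not_ge (h ▸ height_le_northSteps μ i)

lemma pointsAtHeight_false_cons_ne_nil (μ : List Bool) :
    pointsAtHeight (false :: μ) ≠ pointsAtHeight [] := fun h => by
  have := congrFun h 0
  have := pointsAtHeight_zero_pos μ
  simp only [pointsAtHeight_false_cons, pointsAtHeight_nil, ↓reduceIte] at *
  omega

lemma pointsAtHeight_true_cons_ne_nil (μ : List Bool) :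
    pointsAtHeight (true :: μ) ≠ pointsAtHeight [] := fun h =>
  (pointsAtHeight_zero_pos μ).ne' (pointsAtHeight_true_cons_succ μ 0 ▸ congrFun h 1)

lemma pointsAtHeight_false_cons_ne_true_cons (μ μ' : List Bool) :
    pointsAtHeight (false :: μ) ≠ pointsAtHeight (true :: μ') := fun h => by
  have := congrFun h 0
  have := pointsAtHeight_zero_pos μ
  simp only [pointsAtHeight_false_cons, pointsAtHeight_true_cons_zero, ↓reduceIte] at *
  omega

lemma pointsAtHeight_injective : Function.Injective pointsAtHeight := by
  intro μ μ' h
  induction μ generalizing μ' with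
  | nil =>
    match μ' with
    | [] => rfl
    | false :: _ => exact absurd h.symm (pointsAtHeight_false_cons_ne_nil _)
    | true :: _ => exact absurd h.symm (pointsAtHeight_true_cons_ne_nil _)
  | cons s μ ih =>
    match s, μ' with
    | false, [] => exact absurd h (pointsAtHeight_false_cons_ne_nil _)
    | true, [] => exact absurd h (pointsAtHeight_true_cons_ne_nil _)
    | false, true :: _ => exact absurd h (pointsAtHeight_false_cons_ne_true_cons _ _)
    | true, false :: _ => exact absurd h.symm (pointsAtHeight_false_cons_ne_true_cons _ _)
    | false, false :: μ' =>
      congr 1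
      refine ih (funext fun k => ?_)
      simpa only [pointsAtHeight_false_cons, Nat.add_left_cancel_iff] using congrFun h k
    | true, true :: μ' =>
      congr 1
      refine ih (funext fun k => ?_)
      simpa only [pointsAtHeight_true_cons_succ] using congrFun h (k + 1)

lemma exists_pointsAtHeight_eq (n : ℕ) (hc : ∀ k ≤ n, 0 < c k) :
    ∃ μ, northSteps μ = n ∧ ∀ k ≤ n, pointsAtHeight μ k = c k := by
  induction n generalizing c with
  | zero =>
    refine ⟨List.replicate (c 0 - 1) false ++ [], by simp [northSteps, List.count_replicate], ?_⟩
    intro k hk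
    have := hc 0 le_rfl
    rw [Nat.le_zero.mp hk, pointsAtHeight_replicate_append, pointsAtHeight_nil]
    simp only [↓reduceIte]
    omega
  | succ n ih =>
    obtain ⟨μ, hn, hμ⟩ := ih (c := fun k => c (k + 1)) fun k hk => hc _ (Nat.succ_le_succ hk)
    refine ⟨List.replicate (c 0 - 1) false ++ true :: μ, ?_, ?_⟩
    · rw [← hn]
      simp [northSteps, List.count_replicate]
    · rintro (_ | k) hk
      · have := hc 0 (Nat.zero_le _)
        rw [pointsAtHeight_replicate_append, pointsAtHeight_true_cons_zero]
        simp only [↓reduceIte]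
        omega
      · rw [pointsAtHeight_replicate_append, pointsAtHeight_true_cons_succ,
          hμ k (Nat.succ_le_succ_iff.mp hk)]
        simp

lemma isNuPath_iff : IsNuPath ν μ ↔
    μ.length = ν.length ∧ northSteps μ = northSteps ν ∧
      ∀ i ≤ ν.length, height ν i ≤ height μ i := by
  have hν := eastSteps_add_northSteps ν
  have hμ := eastSteps_add_northSteps μ
  have point (hl : μ.length = ν.length) (hn : northSteps μ = northSteps ν) {i : ℕ}
      (hi : i ≤ ν.length) :
      pointAt μ i ∈ APts ν ↔ height ν i ≤ height μ i := by
    have hle := hn ▸ height_le_northSteps μ i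
    rw [height_le_iff_le_fpos hi hle, show pointAt μ i = (abscissa μ i, height μ i) from rfl,
      mem_APts_iff, abscissa_add_height (hl ▸ hi)]
    exact and_iff_right hle
  constructor
  · rintro ⟨he, hn, hA⟩
    have hl : μ.length = ν.length := by omega
    exact ⟨hl, hn, fun i hi => (point hl hn hi).mp (hA i (hl ▸ hi))⟩
  · rintro ⟨hl, hn, hh⟩
    exact ⟨by omega, hn, fun i hi => (point hl hn (hl ▸ hi)).mpr (hh i (hl ▸ hi))⟩

lemma IsNuPath.admissible (hμ : IsNuPath ν μ) : Admissible ν (pointsAtHeight μ) := by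
  obtain ⟨hl, hn, hh⟩ := isNuPath_iff.mp hμ
  have hnorth (i : ℕ) : height μ i ≤ northSteps ν := hn ▸ height_le_northSteps μ i
  rw [pointsAtHeight_eq_levelCount, hl]
  refine admissible_levelCount (fun k hk => ?_) (fun i _ => hnorth i) fun i hi => ?_
  · rw [← hn] at hk
    exact hl ▸ exists_height_eq hk
  · exact (height_le_iff_le_fpos hi (hnorth i)).mp (hh i hi)

lemma IsNuPath.eq_of_pointsAtHeight {μ' : List Bool} (hμ : IsNuPath ν μ) (hμ' : IsNuPath ν μ')
    (h : ∀ k ≤ northSteps ν, pointsAtHeight μ k = pointsAtHeight μ' k) : μ = μ' := by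
  refine pointsAtHeight_injective (funext fun k => ?_)
  rcases le_or_gt k (northSteps ν) with hk | hk
  · exact h k hk
  · rw [pointsAtHeight_eq_zero (hμ.2.1 ▸ hk), pointsAtHeight_eq_zero (hμ'.2.1 ▸ hk)]

lemma Admissible.exists_isNuPath (hc : Admissible ν c) :
    ∃ μ, IsNuPath ν μ ∧ ∀ k ≤ northSteps ν, pointsAtHeight μ k = c k := by
  obtain ⟨μ, hn, hμ⟩ := exists_pointsAtHeight_eq (northSteps ν) hc.pos
  have hcount (k : ℕ) (hk : k ≤ northSteps ν) :
      #{i ∈ Finset.range (μ.length + 1) | height μ i < k + 1} =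
        ∑ j ∈ Finset.range (k + 1), c j := by
    rw [← sum_levelCount, ← pointsAtHeight_eq_levelCount]
    exact Finset.sum_congr rfl fun j hj => hμ j ((Finset.mem_range_succ_iff.mp hj).trans hk)
  have hl : μ.length = ν.length := by
    have := hcount _ le_rfl
    rw [hc.sum_eq, Finset.filter_true_of_mem, Finset.card_range] at this
    · omega
    · exact fun i _ => Nat.lt_succ_of_le (hn ▸ height_le_northSteps μ i)
  refine ⟨μ, isNuPath_iff.mpr ⟨hl, hn, fun i hi => ?_⟩, hμ⟩
  have hnorth := hn ▸ height_le_northSteps μ i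
  rw [height_le_iff_le_fpos hi hnorth, ← Nat.succ_le_succ_iff]
  calc i + 1 = #(Finset.range (i + 1)) := (Finset.card_range _).symm
    _ ≤ #{j ∈ Finset.range (μ.length + 1) | height μ j < height μ i + 1} := by
      refine Finset.card_le_card fun j hj => ?_
      have hji := Finset.mem_range_succ_iff.mp hj
      simp only [Finset.mem_filter, Finset.mem_range, Nat.lt_succ_iff]
      exact ⟨by omega, height_mono μ hji⟩
    _ ≤ fpos ν (height μ i) + 1 := (hcount _ hnorth).trans_le (hc.sum_le _ hnorth)

end Path

section BracketFunction

/-- The conditions on a ν-bracket vector `i ↦ B i`, restricted to the positions `0, …, ℓ` whose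
value is less than `K`; the other positions count as not yet assigned. -/
structure IsBracketBelow (ν : List Bool) (K : ℕ) (B : ℕ → ℕ) : Prop where
  apply_fpos : ∀ k < K, B (fpos ν k) = k
  le_fpos : ∀ i ≤ ν.length, B i < K → i ≤ fpos ν (B i)
  le_of_le_fpos : ∀ i j, i < j → B i < K → j ≤ fpos ν (B i) → B j ≤ B i

/-- A ν-bracket vector as a function on positions, of which only the values at `0, …, ℓ` matter.
Since `b (fpos ν k) = k`, avoiding the pattern 121 means that the entries between an occurrence of
`k` and position `fpos ν k` are at most `k`. -/
structure IsBracketFun (ν : List Bool) (B : ℕ → ℕ) : Prop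
    extends IsBracketBelow ν (northSteps ν + 1) B where
  le_northSteps : ∀ i ≤ ν.length, B i ≤ northSteps ν

variable {ν : List Bool} {B c : ℕ → ℕ} {b : List ℕ} {K i k : ℕ}

lemma getD_bmin (hi : i ≤ ν.length) : (bmin ν).getD i 0 = height ν i := by
  simp [bmin, height, Nat.lt_succ_of_le hi]

lemma IsBracketVector.isBracketFun (hb : IsBracketVector ν b) :
    IsBracketFun ν (fun i => b.getD i 0) := by
  obtain ⟨hl, hf, hbd, havoid⟩ := hb
  have hnorth (i : ℕ) (hi : i ≤ ν.length) : b.getD i 0 ≤ northSteps ν := (hbd i (by omega)).2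
  refine ⟨⟨fun k hk => hf k (Nat.le_of_lt_succ hk), fun i hi _ => ?_, fun i j hij hi hj => ?_⟩,
    hnorth⟩
  · rw [← height_le_iff_le_fpos hi (hnorth i hi), ← getD_bmin hi]
    exact (hbd i (by omega)).1
  · have hi' := Nat.le_of_lt_succ hi
    rcases hj.eq_or_lt with rfl | hlt
    · exact (hf _ hi').le
    · have := fpos_le_length hi'
      exact not_lt.mp fun h => havoid i j _ hij hlt (by omega) ⟨(hf _ hi').symm, h⟩

lemma IsBracketFun.isBracketVector (hB : IsBracketFun ν B) :
    IsBracketVector ν ((List.range (ν.length + 1)).map B) := by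
  have getD_eq {i : ℕ} (hi : i < ν.length + 1) :
      ((List.range (ν.length + 1)).map B).getD i 0 = B i := by simp [hi]
  simp only [IsBracketVector, List.length_map, List.length_range, true_and]
  refine ⟨fun k hk => ?_, fun i hi => ?_, fun i j k hij hjk hk => ?_⟩
  · rw [getD_eq (Nat.lt_succ_of_le (fpos_le_length hk)), hB.apply_fpos k (Nat.lt_succ_of_le hk)]
  · have hi' := Nat.le_of_lt_succ hi
    have hn := hB.le_northSteps i hi'
    rw [getD_eq hi, getD_bmin hi', height_le_iff_le_fpos hi' hn]
    exact ⟨hB.le_fpos i hi' (Nat.lt_succ_of_le hn), hn⟩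
  · rw [getD_eq (hij.trans (hjk.trans hk)), getD_eq (hjk.trans hk), getD_eq hk]
    rintro ⟨hik, hlt⟩
    have hn : B k < northSteps ν + 1 :=
      Nat.lt_succ_of_le (hB.le_northSteps k (Nat.le_of_lt_succ hk))
    have hkf := hB.le_fpos k (Nat.le_of_lt_succ hk) hn
    exact hlt.not_ge (hB.le_of_le_fpos i j hij (hik ▸ hn) (hik ▸ hjk.le.trans hkf))

lemma isBracketVector_iff : IsBracketVector ν b ↔
    ∃ B, IsBracketFun ν B ∧ (List.range (ν.length + 1)).map B = b := by
  refine ⟨fun hb => ⟨_, hb.isBracketFun, List.ext_getElem (by simp [hb.1]) fun i _ hi => ?_⟩, ?_⟩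
  · simp [hi]
  · rintro ⟨B, hB, rfl⟩
    exact hB.isBracketVector

lemma IsBracketFun.lt_succ_northSteps (hB : IsBracketFun ν B) (hi : i ≤ ν.length) :
    B i < northSteps ν + 1 :=
  Nat.lt_succ_of_le (hB.le_northSteps i hi)

lemma IsBracketFun.admissible (hB : IsBracketFun ν B) :
    Admissible ν (levelCount B (ν.length + 1)) :=
  admissible_levelCount
    (fun k hk => ⟨fpos ν k, fpos_le_length hk, hB.apply_fpos k (Nat.lt_succ_of_le hk)⟩)
    hB.le_northSteps fun i hi => hB.le_fpos i hi (hB.lt_succ_northSteps hi)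

lemma exists_isRelUpperSet_card_eq {α : Type*} [LinearOrder α] (U : Finset α) {m : ℕ}
    (hm : m ≤ #U) : ∃ R : Finset α, IsRelUpperSet (R : Set α) (· ∈ U) ∧ #R = m := by
  induction m with
  | zero => exact ⟨∅, by simp, rfl⟩
  | succ m ih =>
    obtain ⟨R, hR, hcard⟩ := ih (Nat.le_of_succ_le hm)
    have hne : (U \ R).Nonempty := by
      refine Finset.sdiff_nonempty.mpr fun h => ?_
      have := Finset.card_le_card h
      omega
    have hmax := Finset.max'_mem _ hne
    rw [Finset.mem_sdiff] at hmax
    refine ⟨insert ((U \ R).max' hne) R, ?_, by rw [Finset.card_insert_of_notMem hmax.2, hcard]⟩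
    intro a ha
    rcases Finset.mem_insert.mp ha with rfl | ha
    · refine ⟨hmax.1, fun b hab hb => ?_⟩
      by_cases hbR : b ∈ R
      · exact Finset.mem_insert_of_mem hbR
      · have := (U \ R).le_max' b (Finset.mem_sdiff.mpr ⟨hb, hbR⟩)
        exact Finset.mem_insert.mpr (Or.inl (this.antisymm hab))
    · exact ⟨hR.prop_of_mem ha, fun b hab hb => Finset.mem_insert_of_mem ((hR ha).2 hab hb)⟩

/-- The positions that may still receive the value `K` when exactly the positions of value less
than `K` have been assigned. -/
noncomputable def freePositions (ν : List Bool) (B : ℕ → ℕ) (K : ℕ) : Finset ℕ :=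
  {i ∈ Finset.range (fpos ν K + 1) | K ≤ B i}

/-- Extends an assignment of the values less than `K` by the value `K` on `R`. Positions that
remain unassigned get the placeholder value `K + 1`. -/
def assignLevel (B : ℕ → ℕ) (K : ℕ) (R : Finset ℕ) (i : ℕ) : ℕ :=
  if B i < K then B i else if i ∈ R then K else K + 1

lemma mem_freePositions : i ∈ freePositions ν B K ↔ i ≤ fpos ν K ∧ K ≤ B i := by
  simp [freePositions]

lemma IsBracketBelow.fpos_mem_freePositions (hB : IsBracketBelow ν K B) (hK : K ≤ northSteps ν) :
    fpos ν K ∈ freePositions ν B K := by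
  refine mem_freePositions.mpr ⟨le_rfl, not_lt.mp fun h => ?_⟩
  exact (hB.le_fpos _ (fpos_le_length hK) h).not_gt (fpos_lt_fpos h hK)

lemma assignLevel_of_lt {R : Finset ℕ} (h : B i < K) : assignLevel B K R i = B i := if_pos h

lemma assignLevel_eq_iff_of_lt {R : Finset ℕ} (hk : k < K) :
    assignLevel B K R i = k ↔ B i = k := by
  unfold assignLevel
  split_ifs <;> omega

lemma assignLevel_eq_self_iff {R : Finset ℕ} : assignLevel B K R i = K ↔ K ≤ B i ∧ i ∈ R := by
  unfold assignLevel
  split_ifs with hlt hR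
  · simp only [hlt.ne, hlt.not_ge, false_and]
  · simp only [not_lt.mp hlt, hR, and_self]
  · simp only [hR, and_false, Nat.succ_ne_self]

lemma assignLevel_lt_succ {R : Finset ℕ} (h : assignLevel B K R i < K + 1) :
    B i < K ∨ K ≤ B i ∧ i ∈ R := by
  unfold assignLevel at h
  split_ifs at h with hlt hR
  · exact Or.inl hlt
  · exact Or.inr ⟨not_lt.mp hlt, hR⟩
  · exact absurd h (lt_irrefl _)

lemma IsBracketBelow.assignLevel {R : Finset ℕ} (hB : IsBracketBelow ν K B)
    (hK : K ≤ northSteps ν) (hR : IsRelUpperSet (R : Set ℕ) (· ∈ freePositions ν B K))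
    (hne : R.Nonempty) : IsBracketBelow ν (K + 1) (assignLevel B K R) where
  apply_fpos k hk := by
    rcases (Nat.le_of_lt_succ hk).eq_or_lt with rfl | hlt
    · have hfree := hB.fpos_mem_freePositions hK
      have ⟨i, hi⟩ := hne
      have hik := (mem_freePositions.mp (hR.prop_of_mem hi)).1
      exact assignLevel_eq_self_iff.mpr
        ⟨(mem_freePositions.mp hfree).2, (hR hi).2 hik hfree⟩
    · rw [assignLevel_eq_iff_of_lt hlt, hB.apply_fpos k hlt]
  le_fpos i hi h := by
    rcases assignLevel_lt_succ h with hlt | hmem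
    · rw [assignLevel_of_lt hlt]
      exact hB.le_fpos i hi hlt
    · rw [assignLevel_eq_self_iff.mpr hmem]
      exact (mem_freePositions.mp (hR.prop_of_mem hmem.2)).1
  le_of_le_fpos i j hij h hj := by
    rcases assignLevel_lt_succ h with hlt | hmem
    · rw [assignLevel_of_lt hlt] at hj ⊢
      have hle := hB.le_of_le_fpos i j hij hlt hj
      rwa [assignLevel_of_lt (hle.trans_lt hlt)]
    · rw [assignLevel_eq_self_iff.mpr hmem] at hj ⊢
      rcases lt_or_ge (B j) K with hjK | hjK
      · exact (assignLevel_of_lt hjK).trans_le hjK.le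
      · have hjR : j ∈ R := (hR hmem.2).2 hij.le (mem_freePositions.mpr ⟨hj, hjK⟩)
        exact (assignLevel_eq_self_iff.mpr ⟨hjK, hjR⟩).le

lemma Admissible.le_card_freePositions (hc : Admissible ν c) (hK : K ≤ northSteps ν)
    (hcount : ∀ k < K, levelCount B (ν.length + 1) k = c k) : c K ≤ #(freePositions ν B K) := by
  have hassigned : #{i ∈ Finset.range (fpos ν K + 1) | ¬ K ≤ B i} ≤ ∑ k ∈ Finset.range K, c k := by
    rw [← Finset.sum_congr rfl fun k hk => hcount k (Finset.mem_range.mp hk), sum_levelCount]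
    simp only [not_le]
    have := fpos_le_length hK
    exact Finset.card_le_card (Finset.filter_subset_filter _ (by simpa using this))
  have hsplit := Finset.card_filter_add_card_filter_not (s := Finset.range (fpos ν K + 1)) (K ≤ B ·)
  have := hc.sum_le K hK
  rw [Finset.sum_range_succ] at this
  rw [Finset.card_range] at hsplit
  unfold freePositions
  omega

lemma Admissible.exists_isBracketBelow (hc : Admissible ν c) (hK : K ≤ northSteps ν + 1) :
    ∃ B, IsBracketBelow ν K B ∧ ∀ k < K, levelCount B (ν.length + 1) k = c k := by
  induction K with
  | zero => exact ⟨0, ⟨by simp, by simp, by simp⟩, by simp⟩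
  | succ K ih =>
    obtain ⟨B, hB, hcount⟩ := ih (Nat.le_of_succ_le hK)
    replace hK := Nat.le_of_succ_le_succ hK
    obtain ⟨R, hR, hcard⟩ := exists_isRelUpperSet_card_eq _ (hc.le_card_freePositions hK hcount)
    refine ⟨assignLevel B K R,
      hB.assignLevel hK hR (Finset.card_pos.mp (hcard ▸ hc.pos K hK)), fun k hk => ?_⟩
    rcases (Nat.le_of_lt_succ hk).eq_or_lt with rfl | hlt
    · rw [← hcard, levelCount]
      congr 1
      ext i
      have hfree (hi : i ∈ R) := mem_freePositions.mp (hR.prop_of_mem hi)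
      have := fpos_le_length hK
      simp only [Finset.mem_filter, Finset.mem_range, assignLevel_eq_self_iff, Nat.lt_succ_iff]
      exact ⟨fun h => h.2.2, fun h => ⟨(hfree h).1.trans this, (hfree h).2, h⟩⟩
    · simp only [← hcount k hlt, levelCount, assignLevel_eq_iff_of_lt hlt]

lemma Admissible.exists_isBracketFun (hc : Admissible ν c) :
    ∃ B, IsBracketFun ν B ∧ ∀ k ≤ northSteps ν, levelCount B (ν.length + 1) k = c k := by
  obtain ⟨B, hB, hBc⟩ := hc.exists_isBracketBelow le_rfl
  have hcard : #{i ∈ Finset.range (ν.length + 1) | B i < northSteps ν + 1} =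
      #(Finset.range (ν.length + 1)) := by
    rw [← sum_levelCount, Finset.card_range]
    refine Eq.trans ?_ hc.sum_eq
    exact Finset.sum_congr rfl fun k hk => hBc k (Finset.mem_range.mp hk)
  have hlt := Finset.card_filter_eq_iff.mp hcard
  simp only [Finset.mem_range, Nat.lt_succ_iff] at hlt
  exact ⟨B, ⟨hB, hlt⟩, fun k hk => hBc k (Nat.lt_succ_of_le hk)⟩

end BracketFunction

section PathBracketVector

variable {ν μ : List Bool} {B : ℕ → ℕ} {st : List (ℕ × ℕ) × List ℕ} {K : ℕ}

/-- One step of the construction of `b(μ)`: the pairs (position, value) assigned so far and the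
list of unassigned positions are updated by placing the value `k`. -/
noncomputable def assignStep (ν μ : List Bool) (st : List (ℕ × ℕ) × List ℕ) (k : ℕ) :
    List (ℕ × ℕ) × List ℕ :=
  let picked := ((st.2.filter fun i => decide (i ≤ fpos ν k)).reverse).take (pointsAtHeight μ k)
  (st.1 ++ picked.map fun i => (i, k), st.2.filter fun i => decide (i ∉ picked))

lemma bracketAssign_eq (ν μ : List Bool) : bracketAssign ν μ =
    ((List.range (northSteps ν + 1)).foldl (assignStep ν μ) ([], List.range (ν.length + 1))).1 :=
  rfl

/-- The state `st` of the construction of `b(μ)` records exactly the entries of `B` less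
than `K`. -/
structure Represents (ν : List Bool) (B : ℕ → ℕ) (K : ℕ) (st : List (ℕ × ℕ) × List ℕ) : Prop where
  assigned_iff : ∀ i k, (i, k) ∈ st.1 ↔ i ≤ ν.length ∧ B i = k ∧ k < K
  unassigned_eq : st.2 = (List.range (ν.length + 1)).filter (K ≤ B ·)

lemma take_countP_eq_filter {α : Type*} {p : α → Bool} {l : List α}
    (h : l.Pairwise fun a b => p b → p a) : l.take (l.countP p) = l.filter p := by
  induction l with
  | nil => rfl
  | cons a l ih =>
    obtain ⟨ha, hl⟩ := List.pairwise_cons.mp h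
    by_cases hpa : p a
    · rw [List.countP_cons_of_pos hpa, List.take_succ_cons, ih hl, List.filter_cons_of_pos hpa]
    · have hnil : l.filter p = [] := List.filter_eq_nil_iff.mpr fun b hb hpb => hpa (ha b hb hpb)
      rw [List.countP_eq_length_filter, List.filter_cons_of_neg hpa, hnil]
      rfl

lemma lookup_eq_some_of_mem {α β : Type*} [DecidableEq α] {i : α} {b : β} {l : List (α × β)}
    (hmem : (i, b) ∈ l) (huniq : ∀ b', (i, b') ∈ l → b' = b) : l.lookup i = some b := by
  obtain ⟨b', hb'⟩ := Option.isSome_iff_exists.mp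
    (List.lookup_isSome_iff.mpr ⟨_, hmem, beq_self_eq_true i⟩)
  obtain ⟨l₁, l₂, rfl, -⟩ := List.lookup_eq_some_iff.mp hb'
  rw [hb', huniq b' (by simp)]

-- `le_of_le_fpos` says that, read from right to left, the available positions carrying the value
-- `K` come before all the others.
lemma Represents.mem_picked_iff {i : ℕ} (hst : Represents ν B K st) (hB : IsBracketFun ν B)
    (hK : K ≤ northSteps ν) :
    i ∈ ((st.2.filter fun i => decide (i ≤ fpos ν K)).reverse).take
      (levelCount B (ν.length + 1) K) ↔ i ≤ ν.length ∧ B i = K := by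
  rw [hst.unassigned_eq, List.filter_filter]
  set avail := (List.range (ν.length + 1)).filter fun i => decide (i ≤ fpos ν K) && decide (K ≤ B i)
    with havail
  have mem_avail (i : ℕ) : i ∈ avail ↔ i ≤ ν.length ∧ i ≤ fpos ν K ∧ K ≤ B i := by
    simp [havail]
  have avail_of_eq {i : ℕ} (hi : i ≤ ν.length) (h : B i = K) : i ≤ fpos ν K ∧ K ≤ B i :=
    ⟨h ▸ hB.le_fpos i hi (hB.lt_succ_northSteps hi), h.ge⟩
  have hcount : levelCount B (ν.length + 1) K = avail.reverse.countP (B · = K) := by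
    rw [List.countP_reverse, havail, List.countP_filter, List.countP_eq_length_filter]
    refine congrArg List.length (List.filter_congr fun i hi => ?_)
    rw [← Bool.decide_and, ← Bool.decide_and, decide_eq_decide]
    exact (and_iff_left_of_imp (avail_of_eq (Nat.le_of_lt_succ (List.mem_range.mp hi)))).symm
  have hsorted : avail.reverse.Pairwise fun i j => decide (B j = K) → decide (B i = K) := by
    refine List.pairwise_reverse.mpr
      ((List.pairwise_lt_range.filter _).imp_of_mem fun {i j} _ hj hij h => ?_)
    have hj := ((mem_avail j).mp hj).2
    rw [decide_eq_true_eq] at h ⊢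
    exact (h ▸ hB.le_of_le_fpos i j hij (h ▸ Nat.lt_succ_of_le hK) (h ▸ hj.1)).antisymm hj.2
  rw [hcount, take_countP_eq_filter hsorted, List.mem_filter, List.mem_reverse, mem_avail,
    decide_eq_true_eq]
  exact ⟨fun h => ⟨h.1.1, h.2⟩, fun h => ⟨⟨h.1, avail_of_eq h.1 h.2⟩, h.2⟩⟩

lemma Represents.assignStep (hst : Represents ν B K st) (hB : IsBracketFun ν B)
    (hK : K ≤ northSteps ν) (hcount : pointsAtHeight μ K = levelCount B (ν.length + 1) K) :
    Represents ν B (K + 1) (assignStep ν μ st K) where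
  assigned_iff i k := by
    simp only [_root_.assignStep, hcount, List.mem_append, hst.assigned_iff, List.mem_map,
      hst.mem_picked_iff hB hK, Prod.mk.injEq]
    constructor
    · rintro (h | ⟨j, h, rfl, rfl⟩)
      · exact ⟨h.1, h.2.1, h.2.2.trans (Nat.lt_succ_self K)⟩
      · exact ⟨h.1, h.2, Nat.lt_succ_self K⟩
    · rintro ⟨hi, hik, hk⟩
      rcases (Nat.le_of_lt_succ hk).eq_or_lt with rfl | hlt
      · exact Or.inr ⟨i, ⟨hi, hik⟩, rfl, rfl⟩
      · exact Or.inl ⟨hi, hik, hlt⟩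
  unassigned_eq := by
    simp only [_root_.assignStep, hcount, hst.mem_picked_iff hB hK]
    rw [hst.unassigned_eq, List.filter_filter]
    refine List.filter_congr fun i hi => ?_
    have := Nat.le_of_lt_succ (List.mem_range.mp hi)
    rw [← Bool.decide_and, decide_eq_decide]
    omega

lemma IsBracketFun.represents_foldl (hB : IsBracketFun ν B)
    (hcount : ∀ k ≤ northSteps ν, pointsAtHeight μ k = levelCount B (ν.length + 1) k)
    (hK : K ≤ northSteps ν + 1) : Represents ν B K
      ((List.range K).foldl (assignStep ν μ) ([], List.range (ν.length + 1))) := by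
  induction K with
  | zero => exact ⟨by simp, by simp⟩
  | succ K ih =>
    have hK' := Nat.le_of_succ_le_succ hK
    simpa only [List.range_succ (n := K), List.foldl_concat] using
      (ih (Nat.le_of_succ_le hK)).assignStep hB hK' (hcount K hK')

lemma IsBracketFun.bracketOfPath_eq (hB : IsBracketFun ν B)
    (hcount : ∀ k ≤ northSteps ν, pointsAtHeight μ k = levelCount B (ν.length + 1) k) :
    bracketOfPath ν μ = (List.range (ν.length + 1)).map B := by
  have hmem := (hB.represents_foldl hcount le_rfl).assigned_iff
  rw [← bracketAssign_eq] at hmem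
  refine List.map_congr_left fun i hi => ?_
  have hi := Nat.le_of_lt_succ (List.mem_range.mp hi)
  rw [lookup_eq_some_of_mem ((hmem i (B i)).mpr ⟨hi, rfl, hB.lt_succ_northSteps hi⟩)
    fun b' hb' => ((hmem i b').mp hb').2.1.symm, Option.getD_some]

end PathBracketVector

section CompatibleSet

/-- The points of `S` that are not leftmost in their row. -/
def nonleftmost (S : Set (ℕ × ℕ)) : Set (ℕ × ℕ) := {p ∈ S | ∃ u < p.1, (u, p.2) ∈ S}

variable {ν : List Bool} {S : Set (ℕ × ℕ)} {u v x y k : ℕ}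

lemma Compatible.symm {p q : ℕ × ℕ} (h : Compatible ν p q) : Compatible ν q p :=
  fun hqp => h hqp.symm

lemma corner_notMem_APts (hS : S.Pairwise (Compatible ν)) (h : (u, v) ∈ S) (h' : (x, y) ∈ S)
    (hux : u < x) (hvy : v < y) : (x, v) ∉ APts ν := fun hA =>
  hS h h' (fun heq => hux.ne (congrArg Prod.fst heq)) (Or.inl ⟨hux, hvy, hA⟩)

lemma finite_row (hS : S.Finite) (k : ℕ) : {x | (x, k) ∈ S}.Finite :=
  hS.preimage (Prod.mk_left_injective k).injOn

lemma rowCount_eq_ncard (S : Set (ℕ × ℕ)) (k : ℕ) : rowCount S k = {p ∈ S | p.2 = k}.ncard := by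
  refine (Set.ncard_image_of_injective _ (Prod.mk_left_injective k)).symm.trans (congrArg _ ?_)
  ext ⟨x, y⟩
  simp only [Set.mem_image, Set.mem_ofPred_eq, Prod.mk.injEq]
  exact ⟨by rintro ⟨x, h, rfl, rfl⟩; exact ⟨h, rfl⟩, by rintro ⟨h, rfl⟩; exact ⟨x, h, rfl, rfl⟩⟩

lemma sum_rowCount (hS : S.Finite) (k : ℕ) :
    ∑ j ∈ Finset.range k, rowCount S j = {p ∈ S | p.2 < k}.ncard := by
  lift S to Finset (ℕ × ℕ) using hS
  have ncard_sep (P : ℕ × ℕ → Prop) [DecidablePred P] :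
      {p ∈ (S : Set (ℕ × ℕ)) | P p}.ncard = #{p ∈ S | P p} := by
    rw [← Set.ncard_coe_finset, Finset.coe_filter]
    rfl
  simp only [rowCount_eq_ncard, ncard_sep, Finset.sum_card_fiberwise_eq_card_filter,
    Finset.mem_range]

lemma ncard_eq_ncard_rows_add (hS : S.Finite) :
    S.ncard = (Prod.snd '' S).ncard + (nonleftmost S).ncard := by
  have hsub : nonleftmost S ⊆ S := fun _ hp => hp.1
  rw [← Set.ncard_sdiff_add_ncard_of_subset hsub hS, Nat.add_right_cancel_iff]
  have hinj : Set.InjOn Prod.snd (S \ nonleftmost S) := by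
    rintro ⟨x, y⟩ ⟨hp, hp'⟩ ⟨x', _⟩ ⟨hq, hq'⟩ rfl
    have hxx' : x ≤ x' := not_lt.mp fun h => hp' ⟨hp, x', h, hq⟩
    have hx'x : x' ≤ x := not_lt.mp fun h => hq' ⟨hq, x, h, hp⟩
    exact Prod.ext (hxx'.antisymm hx'x) rfl
  have himage : Prod.snd '' (S \ nonleftmost S) = Prod.snd '' S := by
    refine (Set.image_mono Set.sdiff_subset).antisymm ?_
    rintro _ ⟨⟨x, y⟩, hp, rfl⟩
    have hmin : sInf {u | (u, y) ∈ S} ∈ {u | (u, y) ∈ S} := Nat.sInf_mem ⟨x, hp⟩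
    exact ⟨_, ⟨hmin, fun ⟨_, _, hu, huS⟩ => Nat.notMem_of_lt_sInf hu huS⟩, rfl⟩
  rw [← hinj.ncard_image, himage]

lemma injOn_fst_nonleftmost (hA : S ⊆ APts ν) (hS : S.Pairwise (Compatible ν)) :
    Set.InjOn Prod.fst (nonleftmost S) := by
  have hlt {x y y' : ℕ} (hp : (x, y) ∈ nonleftmost S) (hq : (x, y') ∈ nonleftmost S) :
      ¬ y < y' := fun h =>
    have ⟨_, hu, huS⟩ := hp.2
    corner_notMem_APts hS huS hq.1 hu h (hA hp.1)
  rintro ⟨x, y⟩ hp ⟨_, y'⟩ hq rfl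
  exact Prod.ext rfl (le_antisymm (not_lt.mp (hlt hq hp)) (not_lt.mp (hlt hp hq)))

lemma ncard_le_fpos_add_one (hA : S ⊆ APts ν) (hS : S.Pairwise (Compatible ν))
    (hk : k ≤ northSteps ν) (hSk : ∀ p ∈ S, p.2 ≤ k) : S.ncard ≤ fpos ν k + 1 := by
  have hrows : (Prod.snd '' S).ncard ≤ k + 1 := by
    rw [← Finset.card_range (k + 1), ← Set.ncard_coe_finset]
    refine Set.ncard_le_ncard ?_ (Finset.finite_toSet _)
    rintro _ ⟨p, hp, rfl⟩
    simpa [Nat.lt_succ_iff] using hSk p hp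
  have hcols : (nonleftmost S).ncard ≤ fpos ν k - k := by
    rw [← (injOn_fst_nonleftmost hA hS).ncard_image]
    have : fpos ν k - k = #(Finset.Icc 1 (fpos ν k - k)) := by simp
    rw [this, ← Set.ncard_coe_finset]
    refine Set.ncard_le_ncard ?_ (Finset.finite_toSet _)
    rintro _ ⟨⟨x, y⟩, ⟨hp, u, hu, -⟩, rfl⟩
    have := mem_APts_iff.mp (mem_APts_of_le_snd (hA hp) (hSk _ hp) hk)
    simp only [Finset.coe_Icc, Set.mem_Icc] at hu ⊢
    omega
  have := le_fpos hk
  rw [ncard_eq_ncard_rows_add ((finite_APts ν).subset hA)]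
  omega

end CompatibleSet

section NuTree

variable {ν : List Bool} {T T' : Set (ℕ × ℕ)} {u v x k : ℕ}

/-- Column `x` of `T` contains, below row `k`, a point that is not leftmost in its row; then no
point of row `k` in column `x` can belong to `T`. -/
def IsForbidden (T : Set (ℕ × ℕ)) (k x : ℕ) : Prop := ∃ j < k, (x, j) ∈ nonleftmost T

lemma not_isForbidden (hA : T ⊆ APts ν) (hT : T.Pairwise (Compatible ν)) (h : (x, k) ∈ T) :
    ¬ IsForbidden T k x := fun ⟨_, hj, hx, _, hu, huT⟩ =>
  corner_notMem_APts hT huT h hu hj (hA hx)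

lemma IsNuTree.mem_of_compatible (hT : IsNuTree ν T) {p : ℕ × ℕ} (hA : p ∈ APts ν)
    (hp : ∀ q ∈ T, Compatible ν p q) : p ∈ T := by
  have hmax := hT.2.2 (insert p T) (Set.insert_subset hA hT.1)
    (hT.2.1.insert fun q hq _ => ⟨hp q hq, (hp q hq).symm⟩) (Set.subset_insert p T)
  exact hmax ▸ Set.mem_insert p T

-- Take `v` minimal: then `(x, v)` is compatible with all of `T`, and it forbids column `x`.
lemma IsNuTree.corner_notMem_of_not_isForbidden (hT : IsNuTree ν T) (hf : ¬ IsForbidden T k x)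
    (h : (u, v) ∈ T) (hu : u < x) (hv : v < k) : (x, v) ∉ APts ν := by
  induction v using Nat.strong_induction_on generalizing u with
  | _ v ih =>
    intro hA
    refine hf ⟨v, hv, hT.mem_of_compatible hA ?_, u, hu, h⟩
    rintro q hq (⟨hxq, hvq, hqA⟩ | ⟨hqx, hqv, hqA⟩)
    · exact corner_notMem_APts hT.2.1 h hq (hu.trans hxq) hvq hqA
    · exact ih q.2 hqv hq hqx (hqv.trans hv) hqA

lemma IsNuTree.mem_of_not_isForbidden (hT : IsNuTree ν T) (hA : (x, k) ∈ APts ν)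
    (hf : ¬ IsForbidden T k x)
    (hright : ∀ q ∈ T, x < q.1 → k < q.2 → (q.1, k) ∉ APts ν) : (x, k) ∈ T := by
  refine hT.mem_of_compatible hA ?_
  rintro q hq (⟨hx, hk, hqA⟩ | ⟨hx, hk, hqA⟩)
  · exact hright q hq hx hk hqA
  · exact hT.corner_notMem_of_not_isForbidden hf hq hx hk hqA

lemma IsNuTree.isRelUpperSet_row (hT : IsNuTree ν T) (k : ℕ) :
    IsRelUpperSet {x | (x, k) ∈ T} fun x => (x, k) ∈ APts ν ∧ ¬ IsForbidden T k x := by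
  refine fun x hx => ⟨⟨hT.1 hx, not_isForbidden hT.1 hT.2.1 hx⟩, fun x' hxx' hx' => ?_⟩
  exact hT.mem_of_not_isForbidden hx'.1 hx'.2 fun q hq hq1 hq2 =>
    corner_notMem_APts hT.2.1 hx hq (hxx'.trans_lt hq1) hq2

lemma not_isForbidden_zero (T : Set (ℕ × ℕ)) (k : ℕ) : ¬ IsForbidden T k 0 :=
  fun ⟨_, _, _, _, hu, _⟩ => Nat.not_lt_zero _ hu

lemma IsNuTree.exists_mem_row (hT : IsNuTree ν T) (hk : k ≤ northSteps ν) :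
    ∃ x, (x, k) ∈ T := by
  have hne : {x | (x, k) ∈ APts ν ∧ ¬ IsForbidden T k x}.Nonempty :=
    ⟨0, zero_mem_APts hk, not_isForbidden_zero T k⟩
  have hbdd : BddAbove {x | (x, k) ∈ APts ν ∧ ¬ IsForbidden T k x} :=
    ⟨eastSteps ν, fun _ h => h.1.1⟩
  obtain ⟨hA, hf⟩ := Nat.sSup_mem hne hbdd
  refine ⟨_, hT.mem_of_not_isForbidden hA hf fun q hq hx hkq hqA => ?_⟩
  obtain ⟨j, hj, hmem, u, hu, huT⟩ : IsForbidden T k q.1 :=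
    not_not.mp fun h => hx.not_ge (le_csSup hbdd ⟨hqA, h⟩)
  exact corner_notMem_APts hT.2.1 huT hq hu (hj.trans hkq) (hT.1 hmem)

lemma IsNuTree.root_mem (hT : IsNuTree ν T) : (0, northSteps ν) ∈ T :=
  hT.mem_of_not_isForbidden (zero_mem_APts le_rfl) (not_isForbidden_zero T _)
    fun _ hq _ hlt => absurd (hT.1 hq).2.2 hlt.not_ge

lemma IsNuTree.isForbidden_of_pos (hT : IsNuTree ν T) (hx : 0 < x) (hxe : x ≤ eastSteps ν) :
    IsForbidden T (northSteps ν + 1) x := by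
  by_contra hf
  refine hT.corner_notMem_of_not_isForbidden hf hT.root_mem hx (Nat.lt_succ_self _) ?_
  rw [mem_APts_iff, fpos_northSteps, ← eastSteps_add_northSteps]
  omega

lemma IsNuTree.ncard_eq (hT : IsNuTree ν T) : T.ncard = ν.length + 1 := by
  have hrows : Prod.snd '' T = Finset.range (northSteps ν + 1) := by
    ext k
    simp only [Set.mem_image, Finset.coe_range, Set.mem_Iio, Nat.lt_succ_iff]
    constructor
    · rintro ⟨p, hp, rfl⟩
      exact (hT.1 hp).2.2
    · intro hk
      obtain ⟨x, hx⟩ := hT.exists_mem_row hk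
      exact ⟨(x, k), hx, rfl⟩
  have hcols : Prod.fst '' nonleftmost T = Finset.Icc 1 (eastSteps ν) := by
    ext x
    simp only [Set.mem_image, Finset.coe_Icc, Set.mem_Icc]
    constructor
    · rintro ⟨p, ⟨hp, u, hu, -⟩, rfl⟩
      exact ⟨Nat.one_le_of_lt hu, (hT.1 hp).1⟩
    · rintro ⟨hx, hxe⟩
      obtain ⟨j, -, hj⟩ := hT.isForbidden_of_pos hx hxe
      exact ⟨(x, j), hj, rfl⟩
  rw [ncard_eq_ncard_rows_add ((finite_APts ν).subset hT.1), hrows,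
    ← (injOn_fst_nonleftmost hT.1 hT.2.1).ncard_image, hcols, Set.ncard_coe_finset,
    Set.ncard_coe_finset, Finset.card_range, Nat.card_Icc, ← eastSteps_add_northSteps]
  omega

lemma isNuTree_of_ncard_eq (hA : T ⊆ APts ν) (hT : T.Pairwise (Compatible ν))
    (h : T.ncard = ν.length + 1) : IsNuTree ν T := by
  refine ⟨hA, hT, fun T' hA' hT' hsub => (Set.eq_of_subset_of_ncard_le hsub ?_ ?_).symm⟩
  · rw [h, ← fpos_northSteps ν]
    exact ncard_le_fpos_add_one hA' hT' le_rfl fun _ hp => (hA' hp).2.2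
  · exact (finite_APts ν).subset hA'

lemma IsNuTree.admissible (hT : IsNuTree ν T) : Admissible ν (rowCount T) := by
  have hfin := (finite_APts ν).subset hT.1
  refine ⟨fun k hk => ?_, fun k hk => ?_, ?_⟩
  · exact (Set.ncard_pos (finite_row hfin k)).mpr (hT.exists_mem_row hk)
  · rw [sum_rowCount hfin]
    exact ncard_le_fpos_add_one (fun _ h => hT.1 h.1) (hT.2.1.mono fun _ h => h.1) hk
      fun _ h => Nat.le_of_lt_succ h.2
  · rw [sum_rowCount hfin, ← hT.ncard_eq]
    congr 1
    exact Set.sep_eq_self_iff_mem_true.mpr fun p hp => Nat.lt_succ_of_le (hT.1 hp).2.2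

lemma eq_of_isRelUpperSet_of_ncard_eq {α : Type*} [LinearOrder α] {P : α → Prop} {s t : Set α}
    (hs : IsRelUpperSet s P) (ht : IsRelUpperSet t P) (hsf : s.Finite) (htf : t.Finite)
    (h : s.ncard = t.ncard) : s = t := by
  by_cases hst : s ⊆ t
  · exact Set.eq_of_subset_of_ncard_le hst h.ge htf
  · obtain ⟨x, hxs, hxt⟩ := Set.not_subset.mp hst
    have hts : t ⊆ s := fun y hy => (hs hxs).2
      (le_of_not_ge fun hyx => hxt ((ht hy).2 hyx (hs hxs).1)) (ht hy).1
    exact (Set.eq_of_subset_of_ncard_le hts h.le hsf).symm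

lemma IsNuTree.eq_of_rowCount (hT : IsNuTree ν T) (hT' : IsNuTree ν T')
    (h : ∀ k ≤ northSteps ν, rowCount T k = rowCount T' k) : T = T' := by
  have hfin := finite_row ((finite_APts ν).subset hT.1)
  have hfin' := finite_row ((finite_APts ν).subset hT'.1)
  have hrow (k : ℕ) (hk : k ≤ northSteps ν) : {x | (x, k) ∈ T} = {x | (x, k) ∈ T'} := by
    induction k using Nat.strong_induction_on with
    | _ k ih =>
      have hforb (x : ℕ) : IsForbidden T k x ↔ IsForbidden T' k x := by
        refine exists_congr fun j => and_congr_right fun hj => ?_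
        have hiff (x : ℕ) := Set.ext_iff.mp (ih j hj (hj.le.trans hk)) x
        exact and_congr (hiff x) (exists_congr fun u => and_congr_right fun _ => hiff u)
      have hupper := hT.isRelUpperSet_row k
      simp only [hforb] at hupper
      exact eq_of_isRelUpperSet_of_ncard_eq hupper (hT'.isRelUpperSet_row k) (hfin k) (hfin' k)
        (h k hk)
  ext ⟨x, k⟩
  exact ⟨fun hx => (Set.ext_iff.mp (hrow k (hT.1 hx).2.2) x).mp hx,
    fun hx => (Set.ext_iff.mp (hrow k (hT'.1 hx).2.2) x).mpr hx⟩

end NuTree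

section TreeOfBracket

/-- The first position of the subtree of position `i` in in-order: the longest run of entries
smaller than `B i` ending just before position `i` starts here. -/
noncomputable def leftEnd (B : ℕ → ℕ) (i : ℕ) : ℕ :=
  sInf {s | s ≤ i ∧ ∀ j, s ≤ j → j < i → B j < B i}

/-- The node of the ν-tree of `B` that comes at position `i` in in-order. All nodes of a column
have the same `leftEnd`, and its abscissa on `ν` is that of the column. -/
noncomputable def bracketNode (ν : List Bool) (B : ℕ → ℕ) (i : ℕ) : ℕ × ℕ :=
  (abscissa ν (leftEnd B i), B i)

/-- The ν-tree whose bracket vector is `B`. -/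
def treeOfBracket (ν : List Bool) (B : ℕ → ℕ) : Set (ℕ × ℕ) :=
  bracketNode ν B '' Set.Iic ν.length

variable {ν : List Bool} {B : ℕ → ℕ} {s t i j k : ℕ}

lemma leftEnd_mem (B : ℕ → ℕ) (i : ℕ) :
    leftEnd B i ∈ {s | s ≤ i ∧ ∀ j, s ≤ j → j < i → B j < B i} :=
  Nat.sInf_mem ⟨i, le_rfl, fun _ hij hji => absurd hij hji.not_ge⟩

lemma leftEnd_le (B : ℕ → ℕ) (i : ℕ) : leftEnd B i ≤ i := (leftEnd_mem B i).1

lemma apply_lt_of_leftEnd_le (hj : leftEnd B i ≤ j) (hji : j < i) : B j < B i :=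
  (leftEnd_mem B i).2 j hj hji

lemma lt_leftEnd (hji : j < i) (h : B i ≤ B j) : j < leftEnd B i :=
  not_le.mp fun hj => (apply_lt_of_leftEnd_le hj hji).not_ge h

lemma apply_le_of_leftEnd_eq_succ (hs : leftEnd B i = s + 1) : B i ≤ B s := by
  by_contra! h
  have hle := leftEnd_le B i
  have hmem : s ∈ {s | s ≤ i ∧ ∀ j, s ≤ j → j < i → B j < B i} := by
    refine ⟨by omega, fun j hsj hji => ?_⟩
    rcases hsj.eq_or_lt with rfl | hlt
    · exact h
    · exact apply_lt_of_leftEnd_le (hs.trans_le hlt) hji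
  have : leftEnd B i ≤ s := Nat.sInf_le hmem
  omega

lemma apply_lt_iff_of_leftEnd_eq (h : leftEnd B i = leftEnd B j) : B i < B j ↔ i < j := by
  have of_lt {i j : ℕ} (h : leftEnd B i = leftEnd B j) (hij : i < j) : B i < B j :=
    apply_lt_of_leftEnd_le (h ▸ leftEnd_le B i) hij
  refine ⟨fun hlt => ?_, of_lt h⟩
  by_contra! hji
  rcases hji.eq_or_lt with rfl | hji
  · exact hlt.false
  · exact hlt.asymm (of_lt h.symm hji)

lemma leftEnd_eq_of_forall (hsi : s ≤ i) (hlt : ∀ j, s ≤ j → j < i → B j < B i)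
    (hle : ∀ t, s = t + 1 → B i ≤ B t) : leftEnd B i = s := by
  refine le_antisymm (Nat.sInf_le ⟨hsi, hlt⟩) ?_
  cases s with
  | zero => exact Nat.zero_le _
  | succ t => exact lt_leftEnd hsi (hle t rfl)

lemma IsBracketFun.abscissa_lt_abscissa_leftEnd (hB : IsBracketFun ν B) (hi : i ≤ ν.length)
    (ht : t < leftEnd B i) : abscissa ν t < abscissa ν (leftEnd B i) := by
  obtain ⟨s, hs⟩ := Nat.exists_eq_add_one.mpr (Nat.zero_lt_of_lt ht)
  have hsi : s + 1 ≤ ν.length := hs ▸ (leftEnd_le B i).trans hi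
  rw [hs] at ht ⊢
  refine (abscissa_mono ν (Nat.le_of_lt_succ ht)).trans_lt ?_
  by_contra! hnorth
  have hk : height ν s ≤ northSteps ν := height_le_northSteps ν s
  have hfpos : fpos ν (height ν s) = s := by
    have h₁ := (height_le_iff_le_fpos (Nat.le_of_succ_le hsi) hk).mp le_rfl
    have h₂ := (height_le_iff_le_fpos hsi hk).not
    have := abscissa_add_height (Nat.le_of_succ_le hsi)
    have := abscissa_add_height hsi
    omega
  have hBs : B s = height ν s := by
    have := hB.apply_fpos _ (Nat.lt_succ_of_le hk)
    rwa [hfpos] at this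
  have hBi : B i ≤ height ν s := (apply_le_of_leftEnd_eq_succ hs).trans hBs.le
  have hi_le := (hB.le_fpos i hi (hB.lt_succ_northSteps hi)).trans (fpos_le_fpos hBi hk)
  have := leftEnd_le B i
  omega

lemma IsBracketFun.abscissa_leftEnd_lt_iff (hB : IsBracketFun ν B) (hj : j ≤ ν.length) :
    abscissa ν (leftEnd B i) < abscissa ν (leftEnd B j) ↔ leftEnd B i < leftEnd B j :=
  ⟨(abscissa_mono ν).reflect_lt, hB.abscissa_lt_abscissa_leftEnd hj⟩

lemma IsBracketFun.abscissa_leftEnd_inj (hB : IsBracketFun ν B) (hi : i ≤ ν.length)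
    (hj : j ≤ ν.length) :
    abscissa ν (leftEnd B i) = abscissa ν (leftEnd B j) ↔ leftEnd B i = leftEnd B j := by
  simp only [le_antisymm_iff, ← not_lt, hB.abscissa_leftEnd_lt_iff hi,
    hB.abscissa_leftEnd_lt_iff hj]

lemma IsBracketFun.bracketNode_mem_APts (hB : IsBracketFun ν B) (hi : i ≤ ν.length) :
    bracketNode ν B i ∈ APts ν := by
  have hn := hB.le_northSteps i hi
  have hle := (leftEnd_le B i).trans (hB.le_fpos i hi (hB.lt_succ_northSteps hi))
  have habs := abscissa_mono ν hle
  have hadd := abscissa_add_height (fpos_le_length hn)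
  rw [height_fpos hn] at hadd
  exact mem_APts_iff.mpr ⟨hn, by omega⟩

lemma IsBracketFun.abscissa_leftEnd_lt_iff_of_eq (hB : IsBracketFun ν B) (hj : j ≤ ν.length)
    (h : B i = B j) : abscissa ν (leftEnd B i) < abscissa ν (leftEnd B j) ↔ i < j := by
  rw [hB.abscissa_leftEnd_lt_iff hj]
  refine ⟨fun hlt => ?_, fun hij => (leftEnd_le B i).trans_lt (lt_leftEnd hij h.ge)⟩
  by_contra! hji
  rcases hji.eq_or_lt with rfl | hji
  · exact hlt.false
  · exact (hlt.trans_le (leftEnd_le B j)).asymm (lt_leftEnd hji h.le)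

lemma IsBracketFun.injOn_bracketNode (hB : IsBracketFun ν B) :
    Set.InjOn (bracketNode ν B) (Set.Iic ν.length) := by
  intro i hi j hj h
  obtain ⟨hx, hy⟩ := Prod.mk.inj h
  refine le_antisymm (not_lt.mp fun hji => ?_) (not_lt.mp fun hij => ?_)
  · exact ((hB.abscissa_leftEnd_lt_iff_of_eq hi hy.symm).mpr hji).ne' hx
  · exact ((hB.abscissa_leftEnd_lt_iff_of_eq hj hy).mpr hij).ne hx

lemma IsBracketFun.treeOfBracket_subset (hB : IsBracketFun ν B) : treeOfBracket ν B ⊆ APts ν := by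
  rintro _ ⟨i, hi, rfl⟩
  exact hB.bracketNode_mem_APts hi

lemma IsBracketFun.corner_bracketNode_notMem (hB : IsBracketFun ν B) (hi : i ≤ ν.length)
    (hj : j ≤ ν.length) (hx : abscissa ν (leftEnd B i) < abscissa ν (leftEnd B j))
    (hy : B i < B j) : (abscissa ν (leftEnd B j), B i) ∉ APts ν := by
  intro hA
  have hn := hB.le_northSteps i hi
  have hlt := (hB.abscissa_leftEnd_lt_iff hj).mp hx
  have hfpos : leftEnd B j ≤ fpos ν (B i) := by
    by_contra! h
    have := hB.abscissa_lt_abscissa_leftEnd hj h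
    have hadd := abscissa_add_height (fpos_le_length hn)
    rw [height_fpos hn] at hadd
    have := (mem_APts_iff.mp hA).2
    omega
  obtain ⟨s, hs⟩ := Nat.exists_eq_add_one.mpr (Nat.zero_lt_of_lt hlt)
  rw [hs] at hlt hfpos
  refine (hy.trans_le (apply_le_of_leftEnd_eq_succ hs)).not_ge ?_
  rcases lt_trichotomy s i with hsi | rfl | his
  · exact (apply_lt_of_leftEnd_le (Nat.le_of_lt_succ hlt) hsi).le
  · exact le_rfl
  · exact hB.le_of_le_fpos i s his (hB.lt_succ_northSteps hi) (Nat.le_of_succ_le hfpos)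

lemma IsBracketFun.pairwise_compatible_treeOfBracket (hB : IsBracketFun ν B) :
    (treeOfBracket ν B).Pairwise (Compatible ν) := by
  rintro _ ⟨i, hi, rfl⟩ _ ⟨j, hj, rfl⟩ - (⟨hx, hy, hA⟩ | ⟨hx, hy, hA⟩)
  · exact hB.corner_bracketNode_notMem hi hj hx hy hA
  · exact hB.corner_bracketNode_notMem hj hi hx hy hA

lemma IsBracketFun.ncard_treeOfBracket (hB : IsBracketFun ν B) :
    (treeOfBracket ν B).ncard = ν.length + 1 := by
  rw [treeOfBracket, hB.injOn_bracketNode.ncard_image, ← Finset.coe_Iic, Set.ncard_coe_finset,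
    Nat.card_Iic]

lemma IsBracketFun.isNuTree (hB : IsBracketFun ν B) : IsNuTree ν (treeOfBracket ν B) :=
  isNuTree_of_ncard_eq hB.treeOfBracket_subset hB.pairwise_compatible_treeOfBracket
    hB.ncard_treeOfBracket

lemma IsBracketFun.rowCount_treeOfBracket (hB : IsBracketFun ν B) (k : ℕ) :
    rowCount (treeOfBracket ν B) k = levelCount B (ν.length + 1) k := by
  have hrow : {p ∈ treeOfBracket ν B | p.2 = k} =
      bracketNode ν B '' (({i ∈ Finset.range (ν.length + 1) | B i = k} : Finset ℕ) : Set ℕ) := by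
    ext p
    constructor
    · rintro ⟨⟨i, hi, rfl⟩, hk⟩
      exact ⟨i, by simpa [Nat.lt_succ_iff] using ⟨hi, hk⟩, rfl⟩
    · rintro ⟨i, hi, rfl⟩
      have hi : i ≤ ν.length ∧ B i = k := by simpa [Nat.lt_succ_iff] using hi
      exact ⟨⟨i, hi.1, rfl⟩, hi.2⟩
  rw [rowCount_eq_ncard, hrow, (hB.injOn_bracketNode.mono ?_).ncard_image, Set.ncard_coe_finset,
    levelCount]
  intro i hi
  have : i ≤ ν.length ∧ B i = k := by simpa [Nat.lt_succ_iff] using hi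
  exact this.1

end TreeOfBracket

section Inorder

variable {ν : List Bool} {B : ℕ → ℕ} {s i j e r : ℕ}

lemma leftChild_eq_some_of_isGreatest {T : Set (ℕ × ℕ)} {p : ℕ × ℕ} {b : ℕ}
    (h : IsGreatest {b | (p.1, b) ∈ T ∧ b < p.2} b) : leftChild T p = some (p.1, b) := by
  rw [leftChild, if_pos ⟨b, h.1⟩, h.csSup_eq]

lemma rightChild_eq_some_of_isLeast {T : Set (ℕ × ℕ)} {p : ℕ × ℕ} {a : ℕ}
    (h : IsLeast {a | (a, p.2) ∈ T ∧ p.1 < a} a) (habove : ∀ b, (a, b) ∈ T → b ≤ p.2) :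
    rightChild T p = some (a, p.2) := by
  rw [rightChild, if_pos ⟨a, h.1⟩, h.csInf_eq, if_neg]
  rintro ⟨b, hb, hlt⟩
  exact hlt.not_ge (habove b hb)

lemma exists_first_max {α : Type*} [LinearOrder α] {B : ℕ → α} {s e : ℕ} (h : s < e) :
    ∃ r, s ≤ r ∧ r < e ∧ (∀ j, s ≤ j → j < r → B j < B r) ∧ ∀ j, r < j → j < e → B j ≤ B r := by
  induction e, h using Nat.le_induction with
  | base => exact ⟨s, le_rfl, Nat.lt_succ_self s, by omega, by omega⟩
  | succ e h ih =>
    obtain ⟨r, hsr, hre, hlt, hle⟩ := ih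
    rcases le_or_gt (B e) (B r) with her | her
    · refine ⟨r, hsr, hre.trans (Nat.lt_succ_self e), hlt, fun j hrj hje => ?_⟩
      rcases (Nat.le_of_lt_succ hje).eq_or_lt with rfl | hje
      · exact her
      · exact hle j hrj hje
    · refine ⟨e, Nat.le_of_succ_le h, Nat.lt_succ_self e, fun j hsj hje => ?_, by omega⟩
      rcases lt_trichotomy j r with hjr | rfl | hrj
      · exact (hlt j hsj hjr).trans her
      · exact her
      · exact (hle j hrj hje).trans_lt her

/-- The positions `s, …, e - 1` form the subtree of position `i`: its first maximum is at `i`, and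
it cannot be extended in either direction. -/
structure IsBlock (ν : List Bool) (B : ℕ → ℕ) (s i e : ℕ) : Prop where
  le : s ≤ i
  lt : i < e
  end_le : e ≤ ν.length + 1
  lt_left : ∀ j, s ≤ j → j < i → B j < B i
  le_right : ∀ j, i < j → j < e → B j ≤ B i
  left_end : ∀ t, s = t + 1 → B i ≤ B t
  right_end : e < ν.length + 1 → B i < B e

lemma IsBlock.le_length (h : IsBlock ν B s i e) : i ≤ ν.length :=
  Nat.le_of_lt_succ (h.lt.trans_le h.end_le)

lemma IsBlock.leftEnd_eq (h : IsBlock ν B s i e) : leftEnd B i = s :=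
  leftEnd_eq_of_forall h.le h.lt_left h.left_end

lemma IsBlock.apply_le (h : IsBlock ν B s i e) (hs : s ≤ j) (he : j < e) : B j ≤ B i := by
  rcases lt_trichotomy j i with hji | rfl | hij
  · exact (h.lt_left j hs hji).le
  · exact le_rfl
  · exact h.le_right j hij he

lemma IsBracketFun.lt_end_of_le_fpos (hB : IsBracketFun ν B) (h : IsBlock ν B s i e)
    (hj : j ≤ fpos ν (B i)) : j < e := by
  by_contra! hej
  have hn := hB.lt_succ_northSteps h.le_length
  have he : e < ν.length + 1 :=
    Nat.lt_succ_of_le ((hej.trans hj).trans (fpos_le_length (Nat.le_of_lt_succ hn)))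
  exact (h.right_end he).not_ge (hB.le_of_le_fpos i e h.lt hn (hej.trans hj))

lemma IsBlock.exists_left (h : IsBlock ν B s i e) (hs : s < i) : ∃ r, IsBlock ν B s r i := by
  obtain ⟨r, hsr, hri, hlt, hle⟩ := exists_first_max (B := B) hs
  have hr := h.lt_left r hsr hri
  exact ⟨r, hsr, hri, h.lt.le.trans h.end_le, hlt, hle,
    fun t ht => hr.le.trans (h.left_end t ht), fun _ => hr⟩

lemma IsBracketFun.exists_right (hB : IsBracketFun ν B) (h : IsBlock ν B s i e)
    (he : i + 1 < e) : ∃ r, IsBlock ν B (i + 1) r e ∧ B r = B i := by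
  obtain ⟨r, hir, hre, hlt, hle⟩ := exists_first_max (B := B) he
  have hn := hB.lt_succ_northSteps h.le_length
  have hfpos : i < fpos ν (B i) := by
    have hi₁ : i + 1 ≤ ν.length := Nat.le_of_lt_succ (he.trans_le h.end_le)
    calc i < i + 1 := Nat.lt_succ_self i
      _ ≤ fpos ν (B (i + 1)) := hB.le_fpos _ hi₁ (hB.lt_succ_northSteps hi₁)
      _ ≤ fpos ν (B i) :=
        fpos_le_fpos (h.le_right _ (Nat.lt_succ_self i) he) (Nat.le_of_lt_succ hn)
  have hmax : B (fpos ν (B i)) ≤ B r := by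
    rcases lt_trichotomy (fpos ν (B i)) r with hfr | hfr | hrf
    · exact (hlt _ hfpos hfr).le
    · rw [hfr]
    · exact hle _ hrf (hB.lt_end_of_le_fpos h le_rfl)
  rw [hB.apply_fpos _ hn] at hmax
  have hr : B r = B i := (h.le_right r hir hre).antisymm hmax
  exact ⟨r, ⟨hir, hre, h.end_le, hlt, hle, fun t ht => Nat.succ.inj ht ▸ hr.le,
    fun hel => hr.trans_lt (h.right_end hel)⟩, hr⟩

lemma IsBracketFun.leftChild_eq_some (hB : IsBracketFun ν B) (h : IsBlock ν B s i e)
    (hr : IsBlock ν B s r i) :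
    leftChild (treeOfBracket ν B) (bracketNode ν B i) = some (bracketNode ν B r) := by
  have heq : bracketNode ν B r = ((bracketNode ν B i).1, B r) := by
    rw [bracketNode, bracketNode, h.leftEnd_eq, hr.leftEnd_eq]
  rw [heq]
  refine leftChild_eq_some_of_isGreatest ⟨⟨⟨r, hr.le_length, heq⟩, h.lt_left r hr.le hr.lt⟩, ?_⟩
  rintro _ ⟨⟨j, hj, hnode⟩, hlt⟩
  obtain ⟨hx, rfl⟩ := Prod.mk.inj hnode
  have hji := (hB.abscissa_leftEnd_inj hj h.le_length).mp hx
  exact hr.apply_le (h.leftEnd_eq ▸ hji ▸ leftEnd_le B j) ((apply_lt_iff_of_leftEnd_eq hji).mp hlt)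

lemma IsBracketFun.leftChild_eq_none (hB : IsBracketFun ν B) (h : IsBlock ν B i i e) :
    leftChild (treeOfBracket ν B) (bracketNode ν B i) = none := by
  refine if_neg ?_
  rintro ⟨_, ⟨j, hj, hnode⟩, hlt⟩
  obtain ⟨hx, rfl⟩ := Prod.mk.inj hnode
  have hji := (hB.abscissa_leftEnd_inj hj h.le_length).mp hx
  exact ((apply_lt_iff_of_leftEnd_eq hji).mp hlt).not_ge (h.leftEnd_eq ▸ hji ▸ leftEnd_le B j)

lemma IsBracketFun.rightChild_eq_some (hB : IsBracketFun ν B) (hr : IsBlock ν B (i + 1) r e)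
    (hri : B r = B i) :
    rightChild (treeOfBracket ν B) (bracketNode ν B i) = some (bracketNode ν B r) := by
  have heq : bracketNode ν B r = (abscissa ν (leftEnd B r), B i) := by rw [bracketNode, hri]
  rw [heq]
  refine rightChild_eq_some_of_isLeast ⟨⟨⟨r, hr.le_length, heq⟩, ?_⟩, ?_⟩ ?_
  · exact (hB.abscissa_leftEnd_lt_iff_of_eq hr.le_length hri.symm).mpr hr.le
  · rintro _ ⟨⟨j, hj, hnode⟩, hlt⟩
    obtain ⟨rfl, hy⟩ := Prod.mk.inj hnode
    have hij : i < j := (hB.abscissa_leftEnd_lt_iff_of_eq hj hy.symm).mp hlt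
    refine not_lt.mp fun hjr => ?_
    have hjr_eq : B j = B r := hy.trans hri.symm
    have hjr := (hB.abscissa_leftEnd_lt_iff_of_eq hr.le_length hjr_eq).mp hjr
    exact (hr.lt_left j hij hjr).ne hjr_eq
  · rintro _ ⟨j, hj, hnode⟩
    obtain ⟨hx, rfl⟩ := Prod.mk.inj hnode
    refine apply_le_of_leftEnd_eq_succ ?_
    rw [(hB.abscissa_leftEnd_inj hj hr.le_length).mp hx, hr.leftEnd_eq]

lemma IsBracketFun.rightChild_eq_none (hB : IsBracketFun ν B) (h : IsBlock ν B s i (i + 1)) :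
    rightChild (treeOfBracket ν B) (bracketNode ν B i) = none := by
  refine if_neg ?_
  rintro ⟨_, ⟨j, hj, hnode⟩, hlt⟩
  obtain ⟨rfl, hy⟩ := Prod.mk.inj hnode
  have hij : i < j := (hB.abscissa_leftEnd_lt_iff_of_eq hj hy.symm).mp hlt
  have hjf := hB.le_fpos j hj (hB.lt_succ_northSteps hj)
  exact (hB.lt_end_of_le_fpos h (hjf.trans_eq (congrArg _ hy))).not_ge hij

lemma IsBracketFun.inorderAux_eq (hB : IsBracketFun ν B) {fuel : ℕ} (h : IsBlock ν B s i e)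
    (hfuel : e ≤ s + fuel) : inorderAux (treeOfBracket ν B) fuel (bracketNode ν B i) =
      (List.Ico s e).map (bracketNode ν B) := by
  induction fuel generalizing s i e with
  | zero => exact absurd (h.le.trans_lt h.lt) hfuel.not_gt
  | succ fuel ih =>
    have hleft : (match leftChild (treeOfBracket ν B) (bracketNode ν B i) with
        | none => []
        | some l => inorderAux (treeOfBracket ν B) fuel l) =
        (List.Ico s i).map (bracketNode ν B) := by
      rcases h.le.eq_or_lt with rfl | hs
      · rw [hB.leftChild_eq_none h, List.Ico.self_empty, List.map_nil]
      · obtain ⟨r, hr⟩ := h.exists_left hs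
        have := h.lt
        rw [hB.leftChild_eq_some h hr]
        exact ih hr (by omega)
    have hright : (match rightChild (treeOfBracket ν B) (bracketNode ν B i) with
        | none => []
        | some r => inorderAux (treeOfBracket ν B) fuel r) =
        (List.Ico (i + 1) e).map (bracketNode ν B) := by
      rcases (Nat.succ_le_of_lt h.lt).eq_or_lt with rfl | he
      · rw [hB.rightChild_eq_none h, List.Ico.self_empty, List.map_nil]
      · obtain ⟨r, hr, hri⟩ := hB.exists_right h he
        have := h.le
        rw [hB.rightChild_eq_some hr hri]
        exact ih hr (by omega)
    rw [inorderAux, hleft, hright, ← List.map_cons, ← List.map_append, ← List.Ico.eq_cons h.lt,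
      List.Ico.append_consecutive h.le h.lt.le]

lemma IsBracketFun.bracketOfTree_treeOfBracket (hB : IsBracketFun ν B) :
    bracketOfTree ν (treeOfBracket ν B) = (List.range (ν.length + 1)).map B := by
  obtain ⟨i, -, hi, hlt, hle⟩ := exists_first_max (B := B) (Nat.succ_pos ν.length)
  have hblock : IsBlock ν B 0 i (ν.length + 1) :=
    ⟨Nat.zero_le i, hi, le_rfl, hlt, hle, by simp, fun h => absurd h (lt_irrefl _)⟩
  have htop : B i = northSteps ν := by
    refine (hB.le_northSteps i hblock.le_length).antisymm ?_
    rw [← hB.apply_fpos _ (Nat.lt_succ_self (northSteps ν)), fpos_northSteps]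
    exact hblock.apply_le (Nat.zero_le _) (Nat.lt_succ_self _)
  have hroot : bracketNode ν B i = (0, northSteps ν) := by
    rw [bracketNode, hblock.leftEnd_eq, htop]
    rfl
  rw [bracketOfTree, hB.ncard_treeOfBracket, ← hroot,
    hB.inorderAux_eq hblock (Nat.zero_add _).ge, List.map_map, List.Ico.zero_bot]
  rfl

end Inorder

section Bijection

variable {ν : List Bool}

lemma bijOn_of_admissible {α : Type*} {A : Set α} {c : α → ℕ → ℕ} {f : α → List ℕ}
    (hadm : ∀ a ∈ A, Admissible ν (c a))
    (hinj : ∀ a ∈ A, ∀ a' ∈ A, (∀ k ≤ northSteps ν, c a k = c a' k) → a = a')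
    (hsurj : ∀ c', Admissible ν c' → ∃ a ∈ A, ∀ k ≤ northSteps ν, c a k = c' k)
    (hf : ∀ a ∈ A, ∀ B, IsBracketFun ν B →
      (∀ k ≤ northSteps ν, c a k = levelCount B (ν.length + 1) k) →
      f a = (List.range (ν.length + 1)).map B) :
    Set.BijOn f A {b | IsBracketVector ν b} := by
  refine ⟨fun a ha => ?_, fun a ha a' ha' heq => ?_, fun b hb => ?_⟩
  · obtain ⟨B, hB, hBc⟩ := (hadm a ha).exists_isBracketFun
    exact isBracketVector_iff.mpr ⟨B, hB, (hf a ha B hB fun k hk => (hBc k hk).symm).symm⟩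
  · obtain ⟨B, hB, hBc⟩ := (hadm a ha).exists_isBracketFun
    obtain ⟨B', hB', hBc'⟩ := (hadm a' ha').exists_isBracketFun
    rw [hf a ha B hB fun k hk => (hBc k hk).symm,
      hf a' ha' B' hB' fun k hk => (hBc' k hk).symm, List.map_inj_left] at heq
    refine hinj a ha a' ha' fun k hk => ?_
    rw [← hBc k hk, ← hBc' k hk, levelCount, levelCount]
    exact congrArg Finset.card (Finset.filter_congr fun i hi => by
      rw [heq i (List.mem_range.mpr (Finset.mem_range.mp hi))])
  · obtain ⟨B, hB, rfl⟩ := isBracketVector_iff.mp hb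
    obtain ⟨a, ha, hac⟩ := hsurj _ hB.admissible
    exact ⟨a, ha, hf a ha B hB hac⟩

lemma Admissible.exists_isNuTree {c : ℕ → ℕ} (hc : Admissible ν c) :
    ∃ T, IsNuTree ν T ∧ ∀ k ≤ northSteps ν, rowCount T k = c k := by
  obtain ⟨B, hB, hBc⟩ := hc.exists_isBracketFun
  exact ⟨_, hB.isNuTree, fun k hk => (hB.rowCount_treeOfBracket k).trans (hBc k hk)⟩

lemma IsNuTree.bracketOfTree_eq {T : Set (ℕ × ℕ)} {B : ℕ → ℕ} (hT : IsNuTree ν T)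
    (hB : IsBracketFun ν B)
    (hcount : ∀ k ≤ northSteps ν, rowCount T k = levelCount B (ν.length + 1) k) :
    bracketOfTree ν T = (List.range (ν.length + 1)).map B := by
  have heq : T = treeOfBracket ν B := hT.eq_of_rowCount hB.isNuTree fun k hk =>
    (hcount k hk).trans (hB.rowCount_treeOfBracket k).symm
  rw [heq, hB.bracketOfTree_treeOfBracket]

end Bijection

theorem bracket_vector_bijections (ν : List Bool) :
    Set.BijOn (bracketOfTree ν) {T | IsNuTree ν T} {b | IsBracketVector ν b} ∧
    Set.BijOn (bracketOfPath ν) {μ | IsNuPath ν μ} {b | IsBracketVector ν b} := by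
  constructor
  · exact bijOn_of_admissible (c := rowCount) (fun _ hT => hT.admissible)
      (fun _ hT _ hT' => hT.eq_of_rowCount hT') (fun _ hc => hc.exists_isNuTree)
      fun _ hT _ hB => hT.bracketOfTree_eq hB
  · exact bijOn_of_admissible (c := pointsAtHeight) (fun _ hμ => hμ.admissible)
      (fun _ hμ _ hμ' => hμ.eq_of_pointsAtHeight hμ') (fun _ hc => hc.exists_isNuPath)
      fun _ _ _ hB => hB.bracketOfPath_eq
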